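/- Assume the homogeneous system x(t+1) = A(t)x(t) admits an exponential dichotomy with projection P and constants α₁, α₂, β₁, β₂, and let f : ℤ → ℝⁿ be a bounded function. Then the function y(t) = ∑_{j=-∞}^{t−1} X(t)P X(j+1)⁻¹ f(j) − ∑_{j=t}^{∞} X(t)(I−P) X(j+1)⁻¹ f(j) is well defined (both series converge absolutely) and satisfies sup_{t∈ℤ} ‖y(t)‖ ≤ (sup_{t∈ℤ} ‖f(t)‖)·[β₁(1+α₁)/α₁ + β₂/α₂]. -/

import Mathlib

/-!
Along each half-line of `ℤ` the norm of the Green kernel is dominated by a geometric sequence of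
ratio `(1 + α)⁻¹`, so both series converge absolutely and are bounded by `sup ‖f‖` times the sum of
the dominating sequence. Evaluating the kernel at `j + 1` makes the stable series start at exponent
`0`, with sum `(1 + α₁) / α₁`, and the unstable one at exponent `1`, with sum `1 / α₂`; this is the
origin of the asymmetry between the two constants.
-/

section GeometricSeries

variable {α : ℝ}

theorem hasSum_one_add_zpow_neg (hα : 0 < α) :
    HasSum (fun m : ℕ ↦ (1 + α) ^ (-(m : ℤ))) ((1 + α) / α) := by
  have hsum : (1 - (1 + α)⁻¹)⁻¹ = (1 + α) / α := by
    rw [← inv_div, inv_inj]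
    field_simp
    ring
  have hratio : (1 + α)⁻¹ < 1 := inv_lt_one_of_one_lt₀ (by linarith)
  simpa only [hsum, zpow_neg, zpow_natCast, inv_pow] using
    hasSum_geometric_of_lt_one (by positivity) hratio

theorem hasSum_one_add_zpow_neg_succ (hα : 0 < α) :
    HasSum (fun m : ℕ ↦ (1 + α) ^ (-(m + 1 : ℤ))) (1 / α) := by
  have hne : 1 + α ≠ 0 := by positivity
  have hterm (m : ℕ) : (1 + α) ^ (-(m : ℤ)) * (1 + α)⁻¹ = (1 + α) ^ (-(m + 1 : ℤ)) := by
    rw [neg_add, zpow_add₀ hne, zpow_neg_one]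
  have hsum : (1 + α) / α * (1 + α)⁻¹ = 1 / α := by field_simp
  simpa only [hterm, hsum] using (hasSum_one_add_zpow_neg hα).mul_right (1 + α)⁻¹

end GeometricSeries

section OperatorSeries

variable {ι 𝕜 E F : Type*} [NontriviallyNormedField 𝕜]
  [SeminormedAddCommGroup E] [NormedSpace 𝕜 E] [SeminormedAddCommGroup F] [NormedSpace 𝕜 F]
  {T : ι → E →L[𝕜] F} {x : ι → E} {c : ι → ℝ} {C M : ℝ}

theorem summable_norm_apply_of_opNorm_le (hc : Summable c) (hT : ∀ i, ‖T i‖ ≤ c i)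
    (hx : ∀ i, ‖x i‖ ≤ M) : Summable fun i ↦ ‖T i (x i)‖ :=
  .of_nonneg_of_le (fun _ ↦ norm_nonneg _)
    (fun i ↦ (T i).le_of_opNorm_le_of_le (hT i) (hx i)) (hc.mul_right M)

theorem norm_tsum_apply_le_of_opNorm_le [CompleteSpace F] (hc : HasSum c C)
    (hT : ∀ i, ‖T i‖ ≤ c i) (hx : ∀ i, ‖x i‖ ≤ M) : ‖∑' i, T i (x i)‖ ≤ C * M :=
  (summable_norm_apply_of_opNorm_le hc.summable hT hx).of_norm.hasSum.norm_le_of_bounded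
    (hc.mul_right M) fun i ↦ (T i).le_of_opNorm_le_of_le (hT i) (hx i)

end OperatorSeries

/-- `U t s` and `V t s` play the roles of `X(t) P X(s)⁻¹` and `X(t) (I - P) X(s)⁻¹`. -/
theorem stmt_12_general {𝕜 E F : Type*} [NontriviallyNormedField 𝕜]
    [SeminormedAddCommGroup E] [NormedSpace 𝕜 E]
    [SeminormedAddCommGroup F] [NormedSpace 𝕜 F] [CompleteSpace F]
    {U V : ℤ → ℤ → E →L[𝕜] F} {α₁ α₂ β₁ β₂ : ℝ} (hα₁ : 0 < α₁) (hα₂ : 0 < α₂)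
    (hU : ∀ s t : ℤ, s ≤ t → ‖U t s‖ ≤ β₁ * (1 + α₁) ^ (s - t))
    (hV : ∀ s t : ℤ, t ≤ s → ‖V t s‖ ≤ β₂ * (1 + α₂) ^ (t - s))
    {f : ℤ → E} (hf : BddAbove (Set.range fun t : ℤ ↦ ‖f t‖)) :
    (∀ t : ℤ, Summable fun m : ℕ ↦ ‖U t (t - m) (f (t - 1 - m))‖) ∧
    (∀ t : ℤ, Summable fun m : ℕ ↦ ‖V t (t + m + 1) (f (t + m))‖) ∧
    ∀ t : ℤ,
      ‖(∑' m : ℕ, U t (t - m) (f (t - 1 - m))) - ∑' m : ℕ, V t (t + m + 1) (f (t + m))‖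
        ≤ (⨆ s : ℤ, ‖f s‖) * (β₁ * (1 + α₁) / α₁ + β₂ / α₂) := by
  have f_le (s : ℤ) : ‖f s‖ ≤ ⨆ s : ℤ, ‖f s‖ := le_ciSup hf s
  have U_le (t : ℤ) (m : ℕ) : ‖U t (t - m)‖ ≤ β₁ * (1 + α₁) ^ (-(m : ℤ)) := by
    convert hU (t - m) t (by lia) using 3
    ring
  have V_le (t : ℤ) (m : ℕ) : ‖V t (t + m + 1)‖ ≤ β₂ * (1 + α₂) ^ (-(m + 1 : ℤ)) := by
    convert hV (t + m + 1) t (by lia) using 3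
    ring
  have sum_U := (hasSum_one_add_zpow_neg hα₁).mul_left β₁
  have sum_V := (hasSum_one_add_zpow_neg_succ hα₂).mul_left β₂
  refine ⟨fun t ↦ summable_norm_apply_of_opNorm_le sum_U.summable (U_le t) fun m ↦ f_le _,
    fun t ↦ summable_norm_apply_of_opNorm_le sum_V.summable (V_le t) fun m ↦ f_le _,
    fun t ↦ ?_⟩
  calc
    _ ≤ ‖∑' m : ℕ, U t (t - m) (f (t - 1 - m))‖ + ‖∑' m : ℕ, V t (t + m + 1) (f (t + m))‖ :=
      norm_sub_le _ _
    _ ≤ β₁ * ((1 + α₁) / α₁) * (⨆ s : ℤ, ‖f s‖) + β₂ * (1 / α₂) * (⨆ s : ℤ, ‖f s‖) :=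
      add_le_add (norm_tsum_apply_le_of_opNorm_le sum_U (U_le t) fun m ↦ f_le _)
        (norm_tsum_apply_le_of_opNorm_le sum_V (V_le t) fun m ↦ f_le _)
    _ = (⨆ s : ℤ, ‖f s‖) * (β₁ * (1 + α₁) / α₁ + β₂ / α₂) := by ring

/-- Under an exponential dichotomy with projection `P` and constants
`α₁, α₂, β₁, β₂`, for any bounded `f : ℤ → ℝⁿ` the function
`y(t) = ∑_{j=-∞}^{t−1} X(t) P X(j+1)⁻¹ f(j) − ∑_{j=t}^{∞} X(t)(I−P) X(j+1)⁻¹ f(j)`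
is well defined (both series converge absolutely) and satisfies
`sup_t ‖y(t)‖ ≤ (sup_t ‖f(t)‖)·[β₁(1+α₁)/α₁ + β₂/α₂]`. The sums are reindexed over `ℕ`
via `j = t − 1 − m` and `j = t + m` respectively. -/
theorem stmt_12 {n : ℕ}
    (A X Xinv : ℤ → (Fin n → ℝ) →L[ℝ] (Fin n → ℝ)) (t₀ : ℤ)
    (hX : ∀ t : ℤ, X (t + 1) = A t * X t) (hX0 : X t₀ = 1)
    (hXinv : ∀ t : ℤ, X t * Xinv t = 1) (hXinv' : ∀ t : ℤ, Xinv t * X t = 1)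
    (P : (Fin n → ℝ) →L[ℝ] (Fin n → ℝ)) (hP : P * P = P)
    (α₁ α₂ β₁ β₂ : ℝ) (hα₁ : 0 < α₁) (hα₂ : 0 < α₂) (hβ₁ : 0 < β₁) (hβ₂ : 0 < β₂)
    (hd₁ : ∀ s t : ℤ, s ≤ t → ‖X t * P * Xinv s‖ ≤ β₁ * (1 + α₁) ^ (s - t))
    (hd₂ : ∀ s t : ℤ, t ≤ s → ‖X t * (1 - P) * Xinv s‖ ≤ β₂ * (1 + α₂) ^ (t - s))
    (f : ℤ → Fin n → ℝ) (hf : BddAbove (Set.range fun t : ℤ => ‖f t‖)) :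
    (∀ t : ℤ, Summable fun m : ℕ =>
      ‖(X t * P * Xinv (t - (m : ℤ))) (f (t - 1 - (m : ℤ)))‖) ∧
    (∀ t : ℤ, Summable fun m : ℕ =>
      ‖(X t * (1 - P) * Xinv (t + (m : ℤ) + 1)) (f (t + (m : ℤ)))‖) ∧
    ∀ t : ℤ,
      ‖(∑' m : ℕ, (X t * P * Xinv (t - (m : ℤ))) (f (t - 1 - (m : ℤ))))
          - ∑' m : ℕ, (X t * (1 - P) * Xinv (t + (m : ℤ) + 1)) (f (t + (m : ℤ)))‖
        ≤ (⨆ s : ℤ, ‖f s‖) * (β₁ * (1 + α₁) / α₁ + β₂ / α₂) :=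
  stmt_12_general (U := fun t s ↦ X t * P * Xinv s) (V := fun t s ↦ X t * (1 - P) * Xinv s)
    hα₁ hα₂ hd₁ hd₂ hf
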